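/- arXiv:1310.7339 — 10 statements merged into one kernel-verified Lean document; each statement's English description precedes it below -/
import Mathlib

section
/- Let W⁰·𝒟⁺ denote the union of the sets γ·𝒟⁺ over all γ ∈ W⁰. Then W⁰·𝒟⁺ equals the connected component of 𝒟 (in the subspace topology of Q) that contains 𝒟⁺. -/
lemma orbit_aux {r : ℕ} (G : Set (Equiv.Perm (Fin r))) (a : Fin r → ℝ)
    (ha : ∀ i j : Fin r, i ≤ j → a j ≤ a i)
    (hG : ∀ k l : Fin r, (k : ℕ) + 1 = l → a k = a l → Equiv.swap k l ∈ G) (n : ℕ) :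
    ∀ i j : Fin r, (i : ℕ) + n = j → a i = a j →
      j ∈ MulAction.orbit (Subgroup.closure G) i := by
  induction n with
  | zero =>
    intro i j hij _
    have : i = j := Fin.ext (by simpa using hij)
    subst this
    exact MulAction.mem_orbit_self _
  | succ n ih =>
    intro i j hij ha'
    have hm : (i : ℕ) + n < r := by have := j.2; omega
    let m : Fin r := ⟨i + n, hm⟩
    have him : i ≤ m := by simp [m, Fin.le_def]
    have hmj : m ≤ j := by simp [m, Fin.le_def]; omega
    have h1 := ha _ _ him
    have h2 := ha _ _ hmj
    have e1 : a i = a m := by linarith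
    have e2 : a m = a j := by linarith
    have h3 := ih i m rfl e1
    have h4 : Equiv.swap m j ∈ G := hG m j (by simp [m]; omega) e2
    obtain ⟨g, hg⟩ := h3
    refine ⟨⟨Equiv.swap m j, Subgroup.subset_closure h4⟩ * g, ?_⟩
    have hg' : g • i = m := hg
    change (_ * g) • i = j
    rw [mul_smul, hg']
    change Equiv.swap m j m = j
    simp

lemma stab_aux {r : ℕ} (G : Set (Equiv.Perm (Fin r))) (a : Fin r → ℝ)
    (ha : ∀ i j : Fin r, i ≤ j → a j ≤ a i)
    (hS : ∀ f ∈ G, f.IsSwap)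
    (hG : ∀ k l : Fin r, (k : ℕ) + 1 = l → a k = a l → Equiv.swap k l ∈ G)
    (p : Equiv.Perm (Fin r)) (hp : a ∘ p = a) : p ∈ Subgroup.closure G := by
  rw [_root_.mem_closure_isSwap hS]
  refine ⟨Set.toFinite _, fun x => ?_⟩
  have hx : a (p x) = a x := congrFun hp x
  rcases le_total x (p x) with h | h
  · exact orbit_aux G a ha hG (p x - x : ℕ) x (p x) (by have := Fin.le_def.1 h; omega) hx.symm
  · rw [MulAction.mem_orbit_symm]
    exact orbit_aux G a ha hG (x - p x : ℕ) (p x) x (by have := Fin.le_def.1 h; omega) hx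

lemma sorted_unique {r : ℕ} (a b : Fin r → ℝ) (p : Equiv.Perm (Fin r))
    (ha : ∀ i j : Fin r, i ≤ j → a j ≤ a i) (hb : ∀ i j : Fin r, i ≤ j → b j ≤ b i)
    (h : b = a ∘ p) : b = a := by
  have := Tuple.unique_monotone (f := fun i => OrderDual.toDual (a i)) (σ := p) (τ := 1)
    (fun i j hij => by
      have := hb i j hij
      rw [h] at this
      exact this)
    (fun i j hij => ha i j hij)
  rw [h]
  exact this


/-- Let `W⁰·𝒟⁺` denote the union of the sets `γ·𝒟⁺` over all `γ ∈ W⁰`.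
Then `W⁰·𝒟⁺` equals the connected component of `𝒟` (in the subspace topology of `Q`)
containing `𝒟⁺`. -/
theorem stmt_0 {r : ℕ} (hr : 1 ≤ r)
    (Q : Set (Fin r → ℝ)) (hQ : Q = {x | ∀ i, 0 ≤ x i})
    (Cplus : Set (Fin r → ℝ))
    (hC : Cplus = {x | (∀ i j : Fin r, i ≤ j → x j ≤ x i) ∧ ∀ i, 0 ≤ x i})
    (D : Set (Fin r → ℝ))
    (hDQ : D ⊆ Q) (hDne : D.Nonempty)
    (hDinv : ∀ σ : Equiv.Perm (Fin r), (fun x => x ∘ σ) '' D = D)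
    (hDopen : ∃ U : Set (Fin r → ℝ), IsOpen U ∧ D = U ∩ Q)
    (Dplus : Set (Fin r → ℝ)) (hDplus : Dplus = D ∩ Cplus)
    (hconn : IsConnected Dplus)
    (Γ0 : Set (Equiv.Perm (Fin r)))
    (hΓ0 : Γ0 = {σ | ∃ k l : Fin r, (k : ℕ) + 1 = (l : ℕ) ∧
        σ = Equiv.swap k l ∧ ∃ x ∈ Dplus, x ≠ 0 ∧ x k = x l})
    (W0 : Subgroup (Equiv.Perm (Fin r))) (hW0 : W0 = Subgroup.closure Γ0)
    (x₀ : Fin r → ℝ) (hx₀ : x₀ ∈ Dplus) :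
    (⋃ σ ∈ W0, (fun x => x ∘ σ) '' Dplus) = connectedComponentIn D x₀ := by
  have hcont : ∀ σ : Equiv.Perm (Fin r), Continuous (fun x : Fin r → ℝ => x ∘ σ) := by
    intro σ
    exact continuous_pi fun i => continuous_apply (σ i)
  have hDσ : ∀ (σ : Equiv.Perm (Fin r)) (x : Fin r → ℝ), x ∈ D → x ∘ σ ∈ D := by
    intro σ x hx
    rw [← hDinv σ]
    exact ⟨x, hx, rfl⟩
  have hDpD : Dplus ⊆ D := by rw [hDplus]; exact Set.inter_subset_left
  have hDpC : ∀ x ∈ Dplus, ∀ i j : Fin r, i ≤ j → x j ≤ x i := by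
    intro x hx
    rw [hDplus, hC] at hx
    exact hx.2.1
  have hx₀D := hDpD hx₀
  have hDpcomp : Dplus ⊆ connectedComponentIn D x₀ :=
    hconn.isPreconnected.subset_connectedComponentIn hx₀ hDpD
  have hcompD : connectedComponentIn D x₀ ⊆ D := connectedComponentIn_subset _ _
  -- invariance of the component
  have hinv : ∀ σ ∈ W0, ∀ x, x ∘ σ ∈ connectedComponentIn D x₀ ↔
      x ∈ connectedComponentIn D x₀ := by
    intro σ hσ
    rw [hW0] at hσ
    induction hσ using Subgroup.closure_induction with
    | mem s hs =>
      rw [hΓ0] at hs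
      obtain ⟨k, l, hkl, rfl, x, hx, hx0, hxe⟩ := hs
      have hfix : x ∘ Equiv.swap k l = x := by
        funext i
        simp only [Function.comp]
        rcases eq_or_ne i k with rfl | hik
        · simp [hxe]
        · rcases eq_or_ne i l with rfl | hil
          · simp [hxe]
          · rw [Equiv.swap_apply_of_ne_of_ne hik hil]
      have hsub : (fun y : Fin r → ℝ => y ∘ Equiv.swap k l) '' connectedComponentIn D x₀ ⊆
          connectedComponentIn D x₀ := by
        have hpre : IsPreconnected ((fun y : Fin r → ℝ => y ∘ Equiv.swap k l) ''
            connectedComponentIn D x₀) :=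
          isPreconnected_connectedComponentIn.image _ (hcont _).continuousOn
        have := hpre.subset_connectedComponentIn (x := x) (F := D)
          ⟨x, hDpcomp hx, hfix⟩ (by
            rintro _ ⟨y, hy, rfl⟩
            exact hDσ _ _ (hcompD hy))
        rwa [← connectedComponentIn_eq (hDpcomp hx)] at this
      intro y
      refine ⟨fun hy => ?_, fun hy => hsub ⟨y, hy, rfl⟩⟩
      have := hsub ⟨_, hy, rfl⟩
      have he : (y ∘ Equiv.swap k l) ∘ Equiv.swap k l = y := by
        funext i; simp
      simpa only [he] using this
    | one => intro x; rfl
    | mul s t _ _ hs ht =>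
      intro x
      rw [← hs x, ← ht (x ∘ s)]
      rfl
    | inv s _ hs =>
      intro x
      rw [← hs (x ∘ (s⁻¹ : Equiv.Perm (Fin r)))]
      have he : (x ∘ (s⁻¹ : Equiv.Perm (Fin r))) ∘ s = x := by
        funext i; simp
      rw [he]
  apply Set.Subset.antisymm
  · intro y hy
    simp only [Set.mem_iUnion] at hy
    obtain ⟨σ, hσ, x, hx, rfl⟩ := hy
    exact (hinv σ hσ x).2 (hDpcomp hx)
  -- the converse inclusion
  have hCclosed : IsClosed Cplus := by
    rw [hC]
    simp only [Set.setOf_and, Set.setOf_forall]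
    refine IsClosed.inter ?_ ?_
    · exact isClosed_iInter fun i => isClosed_iInter fun j => isClosed_iInter fun _ =>
        isClosed_le (continuous_apply j) (continuous_apply i)
    · exact isClosed_iInter fun i => isClosed_le continuous_const (continuous_apply i)
  have hswap : ∀ f ∈ Γ0, f.IsSwap := by
    intro f hf
    rw [hΓ0] at hf
    obtain ⟨k, l, hkl, rfl, _⟩ := hf
    exact ⟨k, l, fun h => by subst h; omega, rfl⟩
  have hadj : ∀ a ∈ Dplus, ∀ k l : Fin r, (k : ℕ) + 1 = l → a k = a l →
      Equiv.swap k l ∈ Γ0 := by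
    intro a ha k l hkl hakl
    rw [hΓ0]
    refine ⟨k, l, hkl, rfl, ?_⟩
    by_cases h0 : a = 0
    · obtain ⟨U, hU, hDU⟩ := hDopen
      have h0U : (0 : Fin r → ℝ) ∈ U := by
        have := hDpD ha
        rw [hDU, h0] at this
        exact this.1
      obtain ⟨ε, hε, hball⟩ := Metric.isOpen_iff.1 hU 0 h0U
      refine ⟨fun _ => ε / 2, ?_, ?_, rfl⟩
      · rw [hDplus, hDU, hC, hQ]
        refine ⟨⟨hball ?_, fun _ => by positivity⟩, fun _ _ _ => le_rfl, fun _ => by positivity⟩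
        rw [Metric.mem_ball, dist_pi_lt_iff hε]
        intro i
        simp only [Pi.zero_apply, Real.dist_eq, sub_zero]
        rw [abs_of_pos (by positivity)]
        linarith
      · intro h
        have := congrFun h k
        simp only [Pi.zero_apply] at this
        linarith
    · exact ⟨a, ha, h0, hakl⟩
  -- the closed pieces
  let P : Set (Equiv.Perm (Fin r)) → Set (Fin r → ℝ) := fun A =>
    ⋃ σ ∈ A, (fun x : Fin r → ℝ => x ∘ (σ⁻¹ : Equiv.Perm (Fin r))) ⁻¹' Cplus
  have hPclosed : ∀ A, IsClosed (P A) := fun A =>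
    (Set.toFinite A).isClosed_biUnion fun σ _ => hCclosed.preimage (hcont _)
  have hPmem : ∀ A, ∀ y ∈ D, y ∈ P A → ∃ σ ∈ A, ∃ a ∈ Dplus, y = a ∘ σ := by
    intro A y hy hyA
    simp only [P, Set.mem_iUnion] at hyA
    obtain ⟨σ, hσ, h⟩ := hyA
    refine ⟨σ, hσ, y ∘ (σ⁻¹ : Equiv.Perm (Fin r)), ?_, ?_⟩
    · rw [hDplus]; exact ⟨hDσ _ _ hy, h⟩
    · funext i; simp
  have hcover : D ⊆ P W0 ∪ P (W0 : Set (Equiv.Perm (Fin r)))ᶜ := by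
    intro y hy
    let τ := Tuple.sort (fun i => OrderDual.toDual (y i))
    have hτ := Tuple.monotone_sort (fun i => OrderDual.toDual (y i))
    have hyC : y ∘ τ ∈ Cplus := by
      rw [hC]
      refine ⟨fun i j hij => hτ hij, fun i => ?_⟩
      have := hDQ hy
      rw [hQ] at this
      exact this _
    by_cases h : τ⁻¹ ∈ W0
    · left
      simp only [P, Set.mem_iUnion]
      exact ⟨τ⁻¹, h, by simpa using hyC⟩
    · right
      simp only [P, Set.mem_iUnion]
      exact ⟨τ⁻¹, h, by simpa using hyC⟩
  have hdisj : ∀ y ∈ D, y ∈ P W0 → y ∉ P (W0 : Set (Equiv.Perm (Fin r)))ᶜ := by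
    intro y hy h1 h2
    obtain ⟨σ, hσ, a, ha, rfl⟩ := hPmem _ y hy h1
    obtain ⟨τ, hτ, b, hb, hab⟩ := hPmem _ _ hy h2
    have e : b = a ∘ (σ * τ⁻¹ : Equiv.Perm (Fin r)) := by
      funext i
      have := congrFun hab (τ⁻¹ i)
      simpa using this.symm
    have hba := sorted_unique a b _ (hDpC a ha) (hDpC b hb) e
    have := stab_aux Γ0 a (hDpC a ha) hswap (hadj a ha) (σ * τ⁻¹) (by rw [← e, hba])
    rw [← hW0] at this
    apply hτ
    have h3 := W0.mul_mem (W0.inv_mem this) hσ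
    simpa using h3
  intro y hy
  have hyP : y ∈ P W0 := by
    by_contra hn
    have hy2 : y ∈ P (W0 : Set (Equiv.Perm (Fin r)))ᶜ := (hcover (hcompD hy)).resolve_left hn
    have hx1 : x₀ ∈ P W0 := by
      simp only [P, Set.mem_iUnion]
      refine ⟨1, W0.one_mem, ?_⟩
      rw [hDplus] at hx₀
      exact hx₀.2
    obtain ⟨z, hz, hz1, hz2⟩ := isPreconnected_closed_iff.1
      (isPreconnected_connectedComponentIn (x := x₀) (F := D)) _ _ (hPclosed _) (hPclosed _)
      (hcompD.trans hcover) ⟨x₀, mem_connectedComponentIn hx₀D, hx1⟩ ⟨y, hy, hy2⟩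
    exact hdisj z (hcompD hz) hz1 hz2
  obtain ⟨σ, hσ, a, ha, rfl⟩ := hPmem _ y (hcompD hy) hyP
  simp only [Set.mem_iUnion]
  exact ⟨σ, hσ, a, ha, rfl⟩
end

section
/- For every permutation γ of {1,…,r}, the set γ·𝒟⁺ intersects W⁰·𝒟⁺ (the union of the sets w·𝒟⁺ over w ∈ W⁰) if and only if γ ∈ W⁰. -/
theorem aux_mem_closure {r : ℕ} (S : Set (Equiv.Perm (Fin r))) (hS : ∀ f ∈ S, f.IsSwap)
    (x : Fin r → ℝ) (hx : ∀ i j : Fin r, i ≤ j → x j ≤ x i)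
    (hadj : ∀ k l : Fin r, (k : ℕ) + 1 = (l : ℕ) → x k = x l → Equiv.swap k l ∈ S)
    (τ : Equiv.Perm (Fin r)) (hτ : x ∘ τ = x) : τ ∈ Subgroup.closure S := by
  have key : ∀ n : ℕ, ∀ i j : Fin r, (i : ℕ) + n = (j : ℕ) → x i = x j →
      j ∈ MulAction.orbit (Subgroup.closure S) i := by
    intro n
    induction n with
    | zero =>
      intro i j h _
      have : i = j := Fin.ext (by omega)
      subst this
      exact MulAction.mem_orbit_self i
    | succ n ih =>
      intro i j h hij
      let k : Fin r := ⟨i + n, by omega⟩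
      have h1 : x k ≤ x i := hx _ _ (by simp [Fin.le_def, k])
      have h2 : x j ≤ x k := hx _ _ (by simp only [Fin.le_def, k]; omega)
      have h3 := ih i k rfl (by linarith)
      have h4 : Equiv.swap k j ∈ S := hadj k j (by simp only [k]; omega) (by linarith)
      have h5 : j ∈ MulAction.orbit (Subgroup.closure S) k :=
        ⟨⟨_, Subgroup.subset_closure h4⟩, Equiv.swap_apply_left k j⟩
      rw [← MulAction.orbit_eq_iff] at h3
      rwa [h3] at h5
  rw [_root_.mem_closure_isSwap hS]
  refine ⟨Set.toFinite _, fun i => ?_⟩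
  have hi : x (τ i) = x i := congrFun hτ i
  rcases le_total (i : ℕ) (τ i : ℕ) with h | h
  · exact key (τ i - i) i (τ i) (by omega) hi.symm
  · rw [MulAction.mem_orbit_symm]
    exact key (i - τ i) (τ i) i (by omega) hi

theorem aux_sorted {r : ℕ} (x y : Fin r → ℝ) (hx : ∀ i j : Fin r, i ≤ j → x j ≤ x i)
    (hy : ∀ i j : Fin r, i ≤ j → y j ≤ y i) (τ : Equiv.Perm (Fin r)) (h : x ∘ τ = y) :
    x = y := by
  have := Tuple.unique_monotone (f := fun i => - x i) (σ := 1) (τ := τ)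
    (fun i j hij => neg_le_neg (hx i j hij))
    (fun i j hij => by
      have := hy i j hij
      rw [← h] at this
      exact neg_le_neg this)
  rw [← h]
  funext i
  have := congrFun this i
  simp at this
  simpa using this

/-- For every permutation `γ` of `{1,…,r}`, the set `γ·𝒟⁺` intersects
`W⁰·𝒟⁺` (the union of the sets `w·𝒟⁺` over `w ∈ W⁰`) if and only if `γ ∈ W⁰`. -/
theorem stmt_1 {r : ℕ} (hr : 1 ≤ r)
    (Q : Set (Fin r → ℝ)) (hQ : Q = {x | ∀ i, 0 ≤ x i})
    (Cplus : Set (Fin r → ℝ))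
    (hC : Cplus = {x | (∀ i j : Fin r, i ≤ j → x j ≤ x i) ∧ ∀ i, 0 ≤ x i})
    (D : Set (Fin r → ℝ))
    (hDQ : D ⊆ Q) (hDne : D.Nonempty)
    (hDinv : ∀ σ : Equiv.Perm (Fin r), (fun x => x ∘ σ) '' D = D)
    (hDopen : ∃ U : Set (Fin r → ℝ), IsOpen U ∧ D = U ∩ Q)
    (Dplus : Set (Fin r → ℝ)) (hDplus : Dplus = D ∩ Cplus)
    (hconn : IsConnected Dplus)
    (Γ0 : Set (Equiv.Perm (Fin r)))
    (hΓ0 : Γ0 = {σ | ∃ k l : Fin r, (k : ℕ) + 1 = (l : ℕ) ∧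
        σ = Equiv.swap k l ∧ ∃ x ∈ Dplus, x ≠ 0 ∧ x k = x l})
    (W0 : Subgroup (Equiv.Perm (Fin r))) (hW0 : W0 = Subgroup.closure Γ0) :
    ∀ γ : Equiv.Perm (Fin r),
      ((fun x => x ∘ γ) '' Dplus ∩ ⋃ σ ∈ W0, (fun x => x ∘ σ) '' Dplus).Nonempty
        ↔ γ ∈ W0 := by
  subst hQ hC hW0
  obtain ⟨U, hU, hDU⟩ := hDopen
  have hswap : ∀ f ∈ Γ0, f.IsSwap := by
    intro f hf
    rw [hΓ0] at hf
    obtain ⟨k, l, hkl, rfl, -⟩ := hf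
    exact ⟨k, l, fun h => by subst h; omega, rfl⟩
  have hnz : ∀ x ∈ Dplus, x ≠ 0 → ∀ τ : Equiv.Perm (Fin r), x ∘ τ = x →
      τ ∈ Subgroup.closure Γ0 := by
    intro x hx hx0 τ hτ
    refine aux_mem_closure Γ0 hswap x ?_ ?_ τ hτ
    · rw [hDplus] at hx
      exact hx.2.1
    · intro k l hkl hxx
      rw [hΓ0]
      exact ⟨k, l, hkl, rfl, x, hx, hx0, hxx⟩
  intro γ
  constructor
  · rintro ⟨z, ⟨x, hx, rfl⟩, hz⟩
    simp only [Set.mem_iUnion] at hz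
    obtain ⟨σ, hσ, y, hy, hyx⟩ := hz
    have hyx' : y ∘ σ = x ∘ γ := hyx
    have h1 : x ∘ (γ * σ⁻¹ : Equiv.Perm (Fin r)) = y := by
      funext i
      have := congrFun hyx' (σ⁻¹ i)
      simpa using this.symm
    have hxy : x = y := by
      rw [hDplus] at hx hy
      exact aux_sorted x y hx.2.1 hy.2.1 _ h1
    subst hxy
    suffices h : γ * σ⁻¹ ∈ Subgroup.closure Γ0 by
      simpa using Subgroup.mul_mem _ h hσ
    by_cases hx0 : x = 0
    · subst hx0
      have h0U : (0 : Fin r → ℝ) ∈ U := by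
        rw [hDplus, hDU] at hx
        exact hx.1.1
      have hc : Continuous (fun t : ℝ => (fun _ : Fin r => t)) := by fun_prop
      have hV : (fun t : ℝ => (fun _ : Fin r => t)) ⁻¹' U ∈ nhds (0 : ℝ) :=
        (hU.preimage hc).mem_nhds h0U
      obtain ⟨ε, hε, hball⟩ := Metric.mem_nhds_iff.1 hV
      have hmem : (fun _ : Fin r => ε / 2) ∈ U := by
        apply hball
        simp only [Metric.mem_ball, Real.dist_eq, sub_zero]
        rw [abs_of_pos (by linarith)]
        linarith
      refine hnz (fun _ => ε / 2) ?_ ?_ _ rfl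
      · rw [hDplus, hDU]
        exact ⟨⟨hmem, fun _ => by positivity⟩, fun _ _ _ => le_rfl, fun _ => by positivity⟩
      · intro h
        have := congrFun h ⟨0, hr⟩
        simp at this
        linarith
    · exact hnz x hx hx0 _ h1
  · intro hγ
    obtain ⟨x, hx⟩ := hconn.nonempty
    refine ⟨x ∘ γ, ⟨x, hx, rfl⟩, ?_⟩
    simp only [Set.mem_iUnion]
    exact ⟨γ, hγ, x, hx, rfl⟩
end

section
/- Let W⁰·Ω⁺ denote the union of the sets γ·Ω⁺ over all γ ∈ W⁰. Then W⁰·Ω⁺ equals the connected component of Ω that contains Ω⁺. -/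
/-- A function on `Fin r` that does not increase along successive indices is antitone. -/
theorem anti_of_adj {r : ℕ} (y : Fin r → ℝ)
    (h : ∀ k l : Fin r, (k : ℕ) + 1 = (l : ℕ) → y l ≤ y k) :
    ∀ i j : Fin r, i ≤ j → y j ≤ y i := by
  have key : ∀ n : ℕ, ∀ i j : Fin r, (i : ℕ) + n = j → y j ≤ y i := by
    intro n
    induction n with
    | zero =>
      intro i j hij
      have : i = j := Fin.ext (by simpa using hij)
      rw [this]
    | succ n ih =>
      intro i j hij
      have hj := j.isLt
      exact (h ⟨i + n, by omega⟩ j (by simp; omega)).trans (ih i ⟨i + n, by omega⟩ rfl)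
  intro i j hij
  exact key (j - i) i j (by have : (i : ℕ) ≤ j := hij; omega)

theorem swap_sum_lt {r : ℕ} (y : Fin r → ℝ) (k l : Fin r) (hkl : (k : ℕ) + 1 = l)
    (h : y k < y l) :
    ∑ i : Fin r, ((i : ℕ) : ℝ) * y (Equiv.swap k l i) < ∑ i : Fin r, ((i : ℕ) : ℝ) * y i := by
  have hne : k ≠ l := by rintro rfl; omega
  have hsub : ∑ i : Fin r, (((i : ℕ) : ℝ) * y (Equiv.swap k l i) - ((i : ℕ) : ℝ) * y i)
      = y k - y l := by
    rw [← Finset.sum_subset (Finset.subset_univ {k, l})]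
    · rw [Finset.sum_pair hne, Equiv.swap_apply_left, Equiv.swap_apply_right, ← hkl]
      push_cast
      ring
    · intro i _ hi
      simp only [Finset.mem_insert, Finset.mem_singleton, not_or] at hi
      rw [Equiv.swap_apply_of_ne_of_ne hi.1 hi.2, sub_self]
  rw [Finset.sum_sub_distrib] at hsub
  linarith

/-- `W⁰·Ω⁺` (the union of the sets `γ·Ω⁺` over `γ ∈ W⁰`) equals the
connected component of `Ω` containing `Ω⁺`. -/
theorem stmt_2 {r : ℕ} (hr : 1 ≤ r)
    (Aplus : Set (Fin r → ℝ))
    (hA : Aplus = {x | ∀ i j : Fin r, i ≤ j → x j ≤ x i})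
    (Ω : Set (Fin r → ℝ))
    (hne : Ω.Nonempty) (hopen : IsOpen Ω)
    (hinv : ∀ σ : Equiv.Perm (Fin r), (fun x => x ∘ σ) '' Ω = Ω)
    (Ωplus : Set (Fin r → ℝ)) (hΩplus : Ωplus = Ω ∩ Aplus)
    (hconn : IsConnected Ωplus)
    (Γ0 : Set (Equiv.Perm (Fin r)))
    (hΓ0 : Γ0 = {σ | ∃ k l : Fin r, (k : ℕ) + 1 = (l : ℕ) ∧
        σ = Equiv.swap k l ∧ ∃ x ∈ Ωplus, x ≠ 0 ∧ x k = x l})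
    (W0 : Subgroup (Equiv.Perm (Fin r))) (hW0 : W0 = Subgroup.closure Γ0)
    (x₀ : Fin r → ℝ) (hx₀ : x₀ ∈ Ωplus) :
    (⋃ σ ∈ W0, (fun x => x ∘ σ) '' Ωplus) = connectedComponentIn Ω x₀ := by
  have hinv' : ∀ (σ : Equiv.Perm (Fin r)) (x : Fin r → ℝ), x ∈ Ω → x ∘ σ ∈ Ω := by
    intro σ x hx
    have := Set.mem_image_of_mem (fun x : Fin r → ℝ => x ∘ σ) hx
    rwa [hinv σ] at this
  have hcont : ∀ σ : Equiv.Perm (Fin r), Continuous (fun x : Fin r → ℝ => x ∘ σ) := by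
    intro σ
    exact continuous_pi fun i => continuous_apply (σ i)
  have hmem : ∀ y : Fin r → ℝ, y ∈ (⋃ σ ∈ W0, (fun x : Fin r → ℝ => x ∘ σ) '' Ωplus) ↔
      ∃ σ ∈ W0, y ∘ σ ∈ Ωplus := by
    intro y
    simp only [Set.mem_iUnion, Set.mem_image]
    constructor
    · rintro ⟨σ, hσ, x, hx, rfl⟩
      refine ⟨σ⁻¹, W0.inv_mem hσ, ?_⟩
      convert hx using 1
      ext i; simp
    · rintro ⟨σ, hσ, hx⟩
      refine ⟨σ⁻¹, W0.inv_mem hσ, _, hx, ?_⟩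
      ext i; simp
  have hsubΩ : Ωplus ⊆ Ω := by rw [hΩplus]; exact Set.inter_subset_left
  have hx₀Ω : x₀ ∈ Ω := hsubΩ hx₀
  have hsubC : Ωplus ⊆ connectedComponentIn Ω x₀ :=
    hconn.isPreconnected.subset_connectedComponentIn hx₀ hsubΩ
  -- adjacent swaps fixing a point of Ωplus lie in W0
  have hswap : ∀ x ∈ Ωplus, ∀ k l : Fin r, (k : ℕ) + 1 = l → x k = x l →
      Equiv.swap k l ∈ W0 := by
    intro x hx k l hkl hxkl
    rw [hW0]
    apply Subgroup.subset_closure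
    rw [hΓ0]
    refine ⟨k, l, hkl, rfl, ?_⟩
    by_cases h0 : x = 0
    · subst h0
      have hc : Continuous (fun c : ℝ => (fun _ : Fin r => c)) :=
        continuous_pi fun _ => continuous_id
      have hev : ∀ᶠ c in nhds (0 : ℝ), (fun _ : Fin r => c) ∈ Ω :=
        (hopen.preimage hc).mem_nhds (hsubΩ hx)
      have hev2 : ∀ᶠ c in nhdsWithin (0 : ℝ) {0}ᶜ, (fun _ : Fin r => c) ∈ Ω ∧ c ≠ 0 :=
        (hev.filter_mono nhdsWithin_le_nhds).and self_mem_nhdsWithin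
      obtain ⟨c, hcΩ, hc0⟩ := hev2.exists
      refine ⟨fun _ => c, ?_, ?_, rfl⟩
      · rw [hΩplus, hA]
        exact ⟨hcΩ, fun i j _ => le_refl _⟩
      · intro h
        exact hc0 (congrFun h k)
    · exact ⟨x, hx, h0, hxkl⟩
  -- local statement
  have hloc : ∀ x ∈ Ωplus, ∀ᶠ y in nhds x, ∃ σ ∈ W0, y ∘ σ ∈ Ωplus := by
    intro x hx
    have hxA : ∀ i j : Fin r, i ≤ j → x j ≤ x i := by
      have := hx
      rw [hΩplus, hA] at this
      exact this.2
    have hord : ∀ᶠ y in nhds x, ∀ i j : Fin r, x j < x i → y j < y i := by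
      rw [Filter.eventually_all]; intro i
      rw [Filter.eventually_all]; intro j
      by_cases h : x j < x i
      · have : ∀ᶠ y : Fin r → ℝ in nhds x, y j < y i :=
          (isOpen_lt (continuous_apply j) (continuous_apply i)).mem_nhds h
        filter_upwards [this] with y hy _ using hy
      · exact Filter.Eventually.of_forall fun y h' => absurd h' h
    filter_upwards [hord, hopen.mem_nhds (hsubΩ hx)] with y hy hyΩ
    obtain ⟨w, ⟨hwW, hwx⟩, hmin⟩ := Set.exists_min_image
      {w : Equiv.Perm (Fin r) | w ∈ W0 ∧ x ∘ w = x}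
      (fun w => ∑ i : Fin r, ((i : ℕ) : ℝ) * y (w i)) (Set.toFinite _) ⟨1, W0.one_mem, rfl⟩
    refine ⟨w, hwW, ?_⟩
    rw [hΩplus, hA]
    refine ⟨hinv' w y hyΩ, anti_of_adj _ ?_⟩
    intro k l hkl
    by_contra hlt
    rw [not_le] at hlt
    have hle : x l ≤ x k := hxA k l (by rw [Fin.le_def]; omega)
    have heq : x k = x l := by
      refine le_antisymm ?_ hle
      by_contra hcon
      rw [not_le] at hcon
      have h1 : x (w l) < x (w k) := by
        have e1 := congrFun hwx k
        have e2 := congrFun hwx l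
        simp only [Function.comp] at e1 e2
        rw [e1, e2]; exact hcon
      exact lt_asymm hlt (hy _ _ h1)
    have hfix : x ∘ (Equiv.swap k l) = x := by
      ext i
      simp only [Function.comp, Equiv.swap_apply_def]
      split_ifs with h1 h2
      · rw [h1, heq]
      · rw [h2, heq]
      · rfl
    have hm := hmin (w * Equiv.swap k l)
      ⟨W0.mul_mem hwW (hswap x hx k l hkl heq), by
        rw [Equiv.Perm.coe_mul, ← Function.comp_assoc, hwx, hfix]⟩
    have hs := swap_sum_lt (y ∘ w) k l hkl hlt
    simp only [Equiv.Perm.mul_apply, Function.comp] at hm hs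
    exact absurd hs (not_lt.mpr hm)
  have hSopen : IsOpen (⋃ σ ∈ W0, (fun x : Fin r → ℝ => x ∘ σ) '' Ωplus) := by
    rw [isOpen_iff_mem_nhds]
    intro y hy
    obtain ⟨σ, hσ, hyσ⟩ := (hmem y).1 hy
    have := (hcont σ).continuousAt.eventually (hloc _ hyσ)
    filter_upwards [this] with z hz
    obtain ⟨τ, hτ, hz⟩ := hz
    exact (hmem z).2 ⟨σ * τ, W0.mul_mem hσ hτ, hz⟩
  have hAcl : IsClosed Aplus := by
    have : Aplus = ⋂ (i : Fin r) (j : Fin r) (_ : i ≤ j), {x : Fin r → ℝ | x j ≤ x i} := by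
      rw [hA]; ext x; simp
    rw [this]
    exact isClosed_iInter fun i => isClosed_iInter fun j => isClosed_iInter fun _ =>
      isClosed_le (continuous_apply j) (continuous_apply i)
  have hFcl : IsClosed (⋃ σ ∈ (W0 : Set (Equiv.Perm (Fin r))),
      (fun x : Fin r → ℝ => x ∘ σ) ⁻¹' Aplus) :=
    (Set.toFinite _).isClosed_biUnion fun σ _ => hAcl.preimage (hcont σ)
  apply Set.Subset.antisymm
  · -- W0 preserves the component
    have hstab : ∀ σ ∈ W0, ∀ x ∈ connectedComponentIn Ω x₀,
        x ∘ σ ∈ connectedComponentIn Ω x₀ := by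
      have hgen : ∀ σ : Equiv.Perm (Fin r), (∃ z ∈ connectedComponentIn Ω x₀,
          z ∘ σ ∈ connectedComponentIn Ω x₀) → ∀ x ∈ connectedComponentIn Ω x₀,
          x ∘ σ ∈ connectedComponentIn Ω x₀ := by
        rintro σ ⟨z, hz, hzσ⟩ x hx
        have hpre : IsPreconnected ((fun x : Fin r → ℝ => x ∘ σ) '' connectedComponentIn Ω x₀) :=
          isPreconnected_connectedComponentIn.image _ (hcont σ).continuousOn
        have hss : (fun x : Fin r → ℝ => x ∘ σ) '' connectedComponentIn Ω x₀ ⊆ Ω := by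
          rintro _ ⟨u, hu, rfl⟩
          exact hinv' σ u (connectedComponentIn_subset _ _ hu)
        have := hpre.subset_connectedComponentIn (Set.mem_image_of_mem _ hz) hss
        have h2 := this (Set.mem_image_of_mem _ hx)
        rwa [← connectedComponentIn_eq hzσ] at h2
      intro σ hσ
      rw [hW0] at hσ
      induction hσ using Subgroup.closure_induction with
      | mem σ h =>
        rw [hΓ0] at h
        obtain ⟨k, l, hkl, rfl, z, hz, -, hzkl⟩ := h
        refine hgen _ ⟨z, hsubC hz, ?_⟩
        have hfix : z ∘ (Equiv.swap k l) = z := by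
          ext i
          simp only [Function.comp, Equiv.swap_apply_def]
          split_ifs with h1 h2
          · rw [h1, hzkl]
          · rw [h2, hzkl]
          · rfl
        rw [hfix]
        exact hsubC hz
      | one => intro x hx; exact hx
      | mul a b _ _ ha hb => intro x hx; exact hb _ (ha _ hx)
      | inv a _ ha =>
        refine hgen _ ⟨x₀ ∘ a, ha _ (hsubC hx₀), ?_⟩
        have : (x₀ ∘ a) ∘ (a⁻¹ : Equiv.Perm (Fin r)) = x₀ := by ext i; simp
        rw [this]
        exact hsubC hx₀
    intro y hy
    simp only [Set.mem_iUnion, Set.mem_image] at hy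
    obtain ⟨σ, hσ, x, hx, rfl⟩ := hy
    exact hstab σ hσ x (hsubC hx)
  · refine isPreconnected_connectedComponentIn.subset_left_of_subset_union hSopen
      hFcl.isOpen_compl ?_ ?_ ⟨x₀, hsubC hx₀, (hmem x₀).2 ⟨1, W0.one_mem, hx₀⟩⟩
    · rw [Set.disjoint_compl_right_iff_subset]
      intro y hy
      obtain ⟨σ, hσ, h⟩ := (hmem y).1 hy
      rw [hΩplus] at h
      exact Set.mem_biUnion (x := σ) hσ h.2
    · intro y hy
      have hyΩ := connectedComponentIn_subset _ _ hy
      by_cases hF : y ∈ (⋃ σ ∈ (W0 : Set (Equiv.Perm (Fin r))),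
          (fun x : Fin r → ℝ => x ∘ σ) ⁻¹' Aplus)
      · left
        obtain ⟨σ, hσ, h⟩ := Set.mem_iUnion₂.1 hF
        refine (hmem y).2 ⟨σ, hσ, ?_⟩
        rw [hΩplus]
        exact ⟨hinv' σ y hyΩ, h⟩
      · right; exact hF
end

section
/- Every nonempty convex subset C of the octant Q that is invariant under all coordinate permutations and open in the subspace topology of Q intersects at least one of the two sets [0,1)^r = {x ∈ Q : x_i < 1 for all i} and (1,∞)^r = {x ∈ Q : x_i > 1 for all i}. -/
/-- Every nonempty convex subset `C` of the octant `Q` that is invariant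
under all coordinate permutations and open in the subspace topology of `Q` intersects at
least one of `[0,1)^r = {x ∈ Q : ∀ i, x i < 1}` and `(1,∞)^r = {x ∈ Q : ∀ i, 1 < x i}`. -/
theorem stmt_4 {r : ℕ} (hr : 1 ≤ r)
    (Q : Set (Fin r → ℝ)) (hQ : Q = {x | ∀ i, 0 ≤ x i})
    (C : Set (Fin r → ℝ))
    (hCQ : C ⊆ Q) (hne : C.Nonempty) (hconv : Convex ℝ C)
    (hinv : ∀ σ : Equiv.Perm (Fin r), (fun x => x ∘ σ) '' C = C)
    (hopen : ∃ U : Set (Fin r → ℝ), IsOpen U ∧ C = U ∩ Q) :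
    (∃ x ∈ C, ∀ i, x i < 1) ∨ (∃ x ∈ C, ∀ i, 1 < x i) := by
  obtain ⟨x, hx⟩ := hne
  haveI : NeZero r := ⟨by omega⟩
  have hr0 : (r : ℝ) ≠ 0 := by exact_mod_cast (by omega : r ≠ 0)
  obtain ⟨c, hc⟩ : ∃ c : ℝ, (fun _ : Fin r => c) ∈ C := by
    refine ⟨(1 / (r : ℝ)) * ∑ j, x j, ?_⟩
    have hmem : ∑ k : Fin r, (1 / (r : ℝ)) • (x ∘ (Equiv.addLeft k)) ∈ C := by
      refine hconv.sum_mem (fun _ _ => by positivity) ?_ ?_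
      · simp [hr0]
      · intro k _
        rw [← hinv (Equiv.addLeft k)]
        exact ⟨x, hx, rfl⟩
    convert hmem using 1
    funext i
    simp only [Finset.sum_apply, Pi.smul_apply, Function.comp_apply, smul_eq_mul,
      Equiv.coe_addLeft]
    rw [← Finset.mul_sum]
    congr 1
    exact (Equiv.sum_comp (Equiv.addRight i) x).symm
  rcases lt_or_ge c 1 with h | h
  · exact Or.inl ⟨_, hc, fun _ => h⟩
  · right
    obtain ⟨U, hU, hCU⟩ := hopen
    have hcont : Continuous (fun t : ℝ => (fun _ : Fin r => t)) := by fun_prop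
    have hV := (hU.preimage hcont).mem_nhds (x := c) (by rw [hCU] at hc; exact hc.1)
    obtain ⟨ε, hε, hb⟩ := Metric.mem_nhds_iff.1 hV
    have hmem : c + ε / 2 ∈ Metric.ball c ε := by
      rw [Metric.mem_ball, Real.dist_eq, add_sub_cancel_left, abs_of_pos (by positivity)]
      linarith
    refine ⟨fun _ => c + ε / 2, ?_, fun _ => by linarith⟩
    rw [hCU, hQ]
    exact ⟨hb hmem, fun _ => by linarith⟩
end

section
/- Let C be a nonempty convex subset of the octant Q, invariant under all coordinate permutations and open in the subspace topology of Q, and suppose C contains a point z with max_i z_i ≥ 1 and min_i z_i ≤ 1 (i.e., z lies neither in [0,1)^r nor in (1,∞)^r). Then C contains a point x having exactly one coordinate equal to 1 and such that either all the other coordinates of x are < 1, or all the other coordinates of x are > 1. -/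
/-- Averaging `z` over a finite set of permutations. -/
theorem avg_aux {r : ℕ} (C : Set (Fin r → ℝ)) (hconv : Convex ℝ C)
    (hinv : ∀ σ : Equiv.Perm (Fin r), (fun x => x ∘ σ) '' C = C)
    (z : Fin r → ℝ) (hz : z ∈ C) (S : Finset (Equiv.Perm (Fin r))) (hS : S.Nonempty) :
    ∃ w ∈ C, ∑ j, w j = ∑ j, z j ∧ (∀ i, (∀ σ ∈ S, σ i = i) → w i = z i) ∧
      (∀ τ : Equiv.Perm (Fin r), (∀ σ, σ * τ ∈ S ↔ σ ∈ S) → ∀ j, w (τ j) = w j) := by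
  have hc : (S.card : ℝ) ≠ 0 := by
    have := hS.card_pos
    positivity
  have hw : ∀ j, (∑ σ ∈ S, (S.card : ℝ)⁻¹ • (z ∘ σ)) j = (S.card : ℝ)⁻¹ * ∑ σ ∈ S, z (σ j) := by
    intro j
    simp [Finset.sum_apply, Finset.mul_sum]
  refine ⟨∑ σ ∈ S, (S.card : ℝ)⁻¹ • (z ∘ σ), ?_, ?_, ?_, ?_⟩
  · refine hconv.sum_mem (fun _ _ => by positivity) ?_ ?_
    · simp [hc]
    · intro σ _
      rw [← hinv σ]
      exact ⟨z, hz, rfl⟩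
  · simp_rw [hw]
    rw [← Finset.mul_sum, Finset.sum_comm]
    simp_rw [Equiv.sum_comp]
    simp [hc]
  · intro i hi
    rw [hw, Finset.sum_congr rfl (fun σ hσ => by rw [hi σ hσ])]
    simp [hc]
  · intro τ hτ j
    rw [hw, hw]
    congr 1
    refine Finset.sum_equiv (Equiv.mulRight τ) ?_ ?_
    · intro σ
      simp [hτ]
    · intro σ _
      simp

/-- Let `C` be a nonempty convex subset of the octant `Q`, invariant under
all coordinate permutations and open in the subspace topology of `Q`, containing a point
`z` with `max_i z_i ≥ 1` and `min_i z_i ≤ 1`. Then `C` contains a point `x` having exactly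
one coordinate equal to `1`, with all other coordinates `< 1` or all other
coordinates `> 1`. -/
theorem stmt_5 {r : ℕ} (hr : 1 ≤ r)
    (Q : Set (Fin r → ℝ)) (hQ : Q = {x | ∀ i, 0 ≤ x i})
    (C : Set (Fin r → ℝ))
    (hCQ : C ⊆ Q) (hne : C.Nonempty) (hconv : Convex ℝ C)
    (hinv : ∀ σ : Equiv.Perm (Fin r), (fun x => x ∘ σ) '' C = C)
    (hopen : ∃ U : Set (Fin r → ℝ), IsOpen U ∧ C = U ∩ Q)
    (z : Fin r → ℝ) (hz : z ∈ C)
    (hz1 : ∃ i, 1 ≤ z i) (hz2 : ∃ i, z i ≤ 1) :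
    ∃ x ∈ C, ∃ i : Fin r, x i = 1 ∧ (∀ j, x j = 1 → j = i) ∧
      ((∀ j, j ≠ i → x j < 1) ∨ (∀ j, j ≠ i → 1 < x j)) := by
  have hr0 : (0 : ℝ) < r := by exact_mod_cast hr
  obtain ⟨c, hcC, hcs, -, hct⟩ := avg_aux C hconv hinv z hz Finset.univ Finset.univ_nonempty
  have hst : ∀ i, ∃ w ∈ C, ∑ j, w j = ∑ j, z j ∧ w i = z i ∧
      ∀ j k, j ≠ i → k ≠ i → w j = w k := by
    intro i
    obtain ⟨w, h1, h2, h3, h4⟩ := avg_aux C hconv hinv z hz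
      (Finset.univ.filter fun σ => σ i = i) ⟨1, by simp⟩
    refine ⟨w, h1, h2, h3 i (by simp), ?_⟩
    intro j k hj hk
    have := h4 (Equiv.swap j k) (by
      intro σ
      simp [Equiv.swap_apply_of_ne_of_ne hj.symm hk.symm]) k
    simpa using this
  let o : Fin r := ⟨0, hr⟩
  have hcc : ∀ j, c j = c o := by
    intro j
    have := hct (Equiv.swap j o) (by simp) o
    simpa using this
  have hsum : ∑ j, z j = r * c o := by
    rw [← hcs, Finset.sum_congr rfl (fun j _ => hcc j)]
    simp
  rcases lt_trichotomy (c o) 1 with hm | hm | hm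
  · obtain ⟨i, hi⟩ := hz1
    obtain ⟨w, hwC, hws, hwi, hwe⟩ := hst i
    have hb : ∀ j, j ≠ i → w j < 1 := by
      intro j hj
      by_contra hcon
      push Not at hcon
      have : ∑ j : Fin r, (1 : ℝ) ≤ ∑ j, w j := by
        refine Finset.sum_le_sum fun k _ => ?_
        by_cases hk : k = i
        · rw [hk, hwi]; exact hi
        · rw [hwe k j hk hj]; exact hcon
      rw [hws, hsum] at this
      simp at this
      nlinarith
    have hd : 0 < z i - c o := by linarith
    have ht0 : 0 < (1 - c o) / (z i - c o) := div_pos (by linarith) hd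
    have ht1 : (1 - c o) / (z i - c o) ≤ 1 := by rw [div_le_one hd]; linarith
    have hte : (1 - c o) / (z i - c o) * (z i - c o) = 1 - c o := div_mul_cancel₀ _ hd.ne'
    generalize (1 - c o) / (z i - c o) = t at ht0 ht1 hte
    have key : ∀ j, j ≠ i → ((1 - t) • c + t • w) j < 1 := by
      intro j hj
      have := hb j hj
      simp only [Pi.add_apply, Pi.smul_apply, smul_eq_mul, hcc j]
      nlinarith
    refine ⟨(1 - t) • c + t • w, hconv hcC hwC (by linarith) ht0.le (by ring), i, ?_, ?_,
      Or.inl key⟩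
    · simp only [Pi.add_apply, Pi.smul_apply, smul_eq_mul, hcc i, hwi]
      linarith
    · intro j hj
      by_contra h
      exact (key j h).ne hj
  · obtain ⟨U, hU, hCU⟩ := hopen
    have hc1 : c = fun _ => 1 := by
      funext j
      rw [hcc j, hm]
    have hcU : c ∈ U := by
      rw [hCU] at hcC
      exact hcC.1
    have hcont : Continuous fun e : ℝ => Function.update (fun _ : Fin r => 1 + e) o (1 : ℝ) := by
      fun_prop
    have h0 : Function.update (fun _ : Fin r => 1 + (0 : ℝ)) o (1 : ℝ) ∈ U := by
      have : Function.update (fun _ : Fin r => 1 + (0 : ℝ)) o (1 : ℝ) = c := by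
        rw [hc1]
        funext j
        by_cases hj : j = o <;> simp [Function.update_apply]
      rw [this]
      exact hcU
    obtain ⟨ε, hε, hball⟩ := Metric.isOpen_iff.1 (hU.preimage hcont) 0 h0
    have hmem : Function.update (fun _ : Fin r => 1 + ε / 2) o (1 : ℝ) ∈ U := by
      refine hball (a := ε / 2) ?_
      rw [Metric.mem_ball, Real.dist_eq, sub_zero, abs_of_pos (by linarith)]
      linarith
    refine ⟨Function.update (fun _ : Fin r => 1 + ε / 2) o (1 : ℝ), ?_, o, Function.update_self .., ?_, Or.inr ?_⟩
    · rw [hCU]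
      refine ⟨hmem, ?_⟩
      rw [hQ]
      intro j
      rw [Function.update_apply]
      split_ifs <;> linarith
    · intro j hj
      by_contra h
      rw [Function.update_of_ne h] at hj
      linarith
    · intro j hj
      rw [Function.update_of_ne hj]
      linarith
  · obtain ⟨i, hi⟩ := hz2
    obtain ⟨w, hwC, hws, hwi, hwe⟩ := hst i
    have hb : ∀ j, j ≠ i → 1 < w j := by
      intro j hj
      by_contra hcon
      push Not at hcon
      have : ∑ j, w j ≤ ∑ j : Fin r, (1 : ℝ) := by
        refine Finset.sum_le_sum fun k _ => ?_
        by_cases hk : k = i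
        · rw [hk, hwi]; exact hi
        · rw [hwe k j hk hj]; exact hcon
      rw [hws, hsum] at this
      simp at this
      nlinarith
    have hd : 0 < c o - z i := by linarith
    have ht0 : 0 < (c o - 1) / (c o - z i) := div_pos (by linarith) hd
    have ht1 : (c o - 1) / (c o - z i) ≤ 1 := by rw [div_le_one hd]; linarith
    have hte : (c o - 1) / (c o - z i) * (c o - z i) = c o - 1 := div_mul_cancel₀ _ hd.ne'
    generalize (c o - 1) / (c o - z i) = t at ht0 ht1 hte
    have key : ∀ j, j ≠ i → 1 < ((1 - t) • c + t • w) j := by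
      intro j hj
      have := hb j hj
      simp only [Pi.add_apply, Pi.smul_apply, smul_eq_mul, hcc j]
      nlinarith
    refine ⟨(1 - t) • c + t • w, hconv hcC hwC (by linarith) ht0.le (by ring), i, ?_, ?_,
      Or.inr key⟩
    · simp only [Pi.add_apply, Pi.smul_apply, smul_eq_mul, hcc i, hwi]
      linarith
    · intro j hj
      by_contra h
      exact (key j h).ne' hj
end

section
/- The union, over all x ∈ Ω, of the sets {Y(x) + t·M : t ∈ convexHull(Σ_{Y(x)})} equals the convex hull of Ω ∪ γ(Ω). -/
/-- With `γ` the swap of the first two coordinates of `ℝ^r`,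
`F = Fix(γ)`, `M = e₁ − e₂`, `x = Y(x) + Z(x)·M` the decomposition along `F ⊕ ℝM`,
`Ω ⊆ ℝ^r` nonempty convex with `Ω ∩ F = ∅`, and `Σ_Y = {t : Y + t·M ∈ Ω ∪ γ(Ω)}`:
the union over `x ∈ Ω` of the sets `{Y(x) + t·M : t ∈ convexHull (Σ_{Y(x)})}` equals the
convex hull of `Ω ∪ γ(Ω)`. -/
theorem stmt_8 {r : ℕ} (hr : 2 ≤ r)
    (i0 i1 : Fin r) (hi0 : (i0 : ℕ) = 0) (hi1 : (i1 : ℕ) = 1)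
    (γ : (Fin r → ℝ) → (Fin r → ℝ)) (hγ : γ = fun x => x ∘ Equiv.swap i0 i1)
    (M : Fin r → ℝ) (hM : M = fun i => if i = i0 then 1 else if i = i1 then -1 else 0)
    (Z : (Fin r → ℝ) → ℝ) (hZ : Z = fun x => (x i0 - x i1) / 2)
    (Y : (Fin r → ℝ) → (Fin r → ℝ)) (hY : Y = fun x => x - Z x • M)
    (Ω : Set (Fin r → ℝ)) (hne : Ω.Nonempty) (hconv : Convex ℝ Ω)
    (hdisj : Ω ∩ {x | x i0 = x i1} = ∅)
    (Sig : (Fin r → ℝ) → Set ℝ)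
    (hSig : Sig = fun Y₀ => {t : ℝ | Y₀ + t • M ∈ Ω ∪ γ '' Ω}) :
    (⋃ x ∈ Ω, (fun t => Y x + t • M) '' convexHull ℝ (Sig (Y x)))
      = convexHull ℝ (Ω ∪ γ '' Ω) := by
  have hne01 : i0 ≠ i1 := by
    intro h
    rw [h] at hi0
    omega
  have hM0 : M i0 = 1 := by simp [hM]
  have hM1 : M i1 = -1 := by simp [hM, hne01.symm]
  have hg : ∀ x, γ x = x - (2 * Z x) • M := by
    intro x
    funext i
    by_cases h0 : i = i0
    · subst h0
      simp [hγ, hM0, hZ]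
      ring
    by_cases h1 : i = i1
    · subst h1
      simp [hγ, hM1, hZ]
      ring
    · simp [hγ, hM, h0, h1, Equiv.swap_apply_of_ne_of_ne]
  have hZlin : ∀ (a b : ℝ) (x y : Fin r → ℝ), Z (a • x + b • y) = a * Z x + b * Z y := by
    intro a b x y
    simp [hZ]
    ring
  have hZne : ∀ x ∈ Ω, Z x ≠ 0 := by
    intro x hx h
    have : x ∈ Ω ∩ {x | x i0 = x i1} := by
      refine ⟨hx, ?_⟩
      simp only [hZ] at h
      simp only [Set.mem_setOf_eq]
      linarith
    rw [hdisj] at this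
    exact this
  have hsign : ∀ x ∈ Ω, ∀ y ∈ Ω, 0 < Z x → Z y < 0 → False := by
    intro x hx y hy h1 h2
    have hd : 0 < Z x - Z y := by linarith
    have hw : (-Z y / (Z x - Z y)) • x + (Z x / (Z x - Z y)) • y ∈ Ω := by
      apply hconv hx hy
      · exact div_nonneg (by linarith) hd.le
      · exact div_nonneg h1.le hd.le
      · field_simp
        ring
    apply hZne _ hw
    rw [hZlin]
    field_simp
    ring
  have hγconv : Convex ℝ (γ '' Ω) := by
    apply hconv.is_linear_image
    constructor
    · intro x y
      funext i
      simp [hγ]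
    · intro c x
      funext i
      simp [hγ]
  apply Set.Subset.antisymm
  · intro p hp
    simp only [Set.mem_iUnion] at hp
    obtain ⟨x, hx, t, ht, rfl⟩ := hp
    have hc : Convex ℝ {t : ℝ | Y x + t • M ∈ convexHull ℝ (Ω ∪ γ '' Ω)} := by
      intro s hs t ht a b ha hb hab
      have := convex_convexHull ℝ (Ω ∪ γ '' Ω) hs ht ha hb hab
      simp only [Set.mem_setOf_eq]
      convert this using 1
      obtain rfl : a = 1 - b := by linarith
      module
    refine convexHull_min ?_ hc ht
    intro s hs
    rw [hSig] at hs
    exact subset_convexHull ℝ _ hs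
  · intro p hp
    rw [convexHull_union hne (hne.image _), hconv.convexHull_eq, hγconv.convexHull_eq,
      mem_convexJoin] at hp
    obtain ⟨x, hx, _, ⟨y, hy, rfl⟩, a, b, ha, hb, hab, rfl⟩ := hp
    have hw : a • x + b • y ∈ Ω := hconv hx hy ha hb hab
    have hZw := hZlin a b x y
    have hwne := hZne _ hw
    have key : 0 ≤ a * Z x / Z (a • x + b • y) ∧ 0 ≤ b * Z y / Z (a • x + b • y) := by
      rcases lt_or_gt_of_ne (hZne x hx) with h1 | h1 <;>
        rcases lt_or_gt_of_ne (hZne y hy) with h2 | h2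
      · have : Z (a • x + b • y) ≤ 0 := by rw [hZw]; nlinarith
        exact ⟨div_nonneg_of_nonpos (by nlinarith) this, div_nonneg_of_nonpos (by nlinarith) this⟩
      · exact (hsign y hy x hx h2 h1).elim
      · exact (hsign x hx y hy h1 h2).elim
      · have : 0 ≤ Z (a • x + b • y) := by rw [hZw]; positivity
        exact ⟨div_nonneg (by positivity) this, div_nonneg (by positivity) this⟩
    simp only [Set.mem_iUnion]
    refine ⟨a • x + b • y, hw, ?_⟩
    generalize hwd : a • x + b • y = w at *
    refine ⟨Z w - 2 * b * Z y, ?_, ?_⟩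
    · have m1 : Z w ∈ Sig (Y w) := by
        rw [hSig, hY]
        left
        simpa using hw
      have m2 : -Z w ∈ Sig (Y w) := by
        rw [hSig, hY]
        right
        refine ⟨w, hw, ?_⟩
        rw [hg]
        module
      have := convex_convexHull ℝ (Sig (Y w)) (subset_convexHull ℝ _ m1)
        (subset_convexHull ℝ _ m2) key.1 key.2 (by field_simp; linarith)
      convert this using 1
      simp only [smul_eq_mul]
      field_simp
      linarith
    · simp only [hY, hg]
      rw [← hwd]
      module
end

section
/- Two points v, v' ∈ ℂ² lie in the same orbit of the group 𝒢 of transformations of ℂ² generated by the rotations R_t (t ∈ ℝ) and the real translations τ_u (u ∈ ℝ²) if and only if ‖Im v‖ = ‖Im v'‖. Consequently, every 𝒢-orbit in ℂ² contains exactly one point of the form (i·s, 0) with s ≥ 0. -/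
/-- The complex rotation `R_t` of `ℂ²`. -/
noncomputable def rotC (l : ℂ) (v : ℂ × ℂ) : ℂ × ℂ :=
  (v.1 * Complex.cos l - v.2 * Complex.sin l, v.1 * Complex.sin l + v.2 * Complex.cos l)

lemma rotC_rotC (t s : ℂ) (v : ℂ × ℂ) : rotC t (rotC s v) = rotC (t + s) v := by
  simp only [rotC, Complex.cos_add, Complex.sin_add, Prod.mk.injEq]
  constructor <;> ring

lemma rotC_zero (v : ℂ × ℂ) : rotC 0 v = v := by
  simp [rotC]

/-- The rotation `R_t` (`t ∈ ℝ`) as a bijective transformation of `ℂ²`. -/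
noncomputable def rotCEquiv (t : ℝ) : Equiv.Perm (ℂ × ℂ) where
  toFun := rotC (t : ℂ)
  invFun := rotC (-(t : ℂ))
  left_inv v := by rw [rotC_rotC, neg_add_cancel, rotC_zero]
  right_inv v := by rw [rotC_rotC, add_neg_cancel, rotC_zero]

/-- The real translation `τ_u` (`u ∈ ℝ² ⊆ ℂ²`) as a bijective transformation of `ℂ²`. -/
noncomputable def transEquiv (u : ℝ × ℝ) : Equiv.Perm (ℂ × ℂ) :=
  Equiv.addLeft (((u.1 : ℂ), (u.2 : ℂ)) : ℂ × ℂ)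

/-- The group `𝒢` of transformations of `ℂ²` generated by the rotations `R_t` (`t ∈ ℝ`)
and the real translations `τ_u` (`u ∈ ℝ²`). -/
noncomputable def G : Subgroup (Equiv.Perm (ℂ × ℂ)) :=
  Subgroup.closure (Set.range rotCEquiv ∪ Set.range transEquiv)

/-- The Euclidean norm on `ℝ²`. -/
noncomputable def enorm2 (x : ℝ × ℝ) : ℝ := Real.sqrt (x.1 ^ 2 + x.2 ^ 2)

lemma rotC_im (t : ℝ) (v : ℂ × ℂ) :
    (rotC t v).1.im = v.1.im * Real.cos t - v.2.im * Real.sin t ∧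
    (rotC t v).2.im = v.1.im * Real.sin t + v.2.im * Real.cos t := by
  simp [rotC, ← Complex.ofReal_cos, ← Complex.ofReal_sin]

lemma G_enorm2 (g : Equiv.Perm (ℂ × ℂ)) (hg : g ∈ G) :
    ∀ v : ℂ × ℂ, enorm2 ((g v).1.im, (g v).2.im) = enorm2 (v.1.im, v.2.im) := by
  unfold G at hg
  induction hg using Subgroup.closure_induction with
  | mem x hx =>
    intro v
    rcases hx with ⟨t, rfl⟩ | ⟨u, rfl⟩
    · obtain ⟨h1, h2⟩ := rotC_im t v
      change enorm2 ((rotC t v).1.im, (rotC t v).2.im) = _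
      rw [h1, h2]
      unfold enorm2
      congr 1
      simp only
      linear_combination (v.1.im ^ 2 + v.2.im ^ 2) * Real.sin_sq_add_cos_sq t
    · simp [transEquiv]
  | one => intro v; rfl
  | mul x y _ _ hx hy =>
    intro v
    rw [Equiv.Perm.mul_apply, hx, hy]
  | inv x _ hx =>
    intro v
    have := hx (x⁻¹ v)
    have e : x (x⁻¹ v) = v := x.apply_symm_apply v
    rw [e] at this
    exact this.symm

lemma G_canon (v : ℂ × ℂ) :
    ∃ g ∈ G, g v = (Complex.I * (enorm2 (v.1.im, v.2.im) : ℝ), 0) := by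
  set c : ℂ := ⟨v.1.im, v.2.im⟩ with hc
  have hn : enorm2 (v.1.im, v.2.im) = ‖c‖ := by
    rw [Complex.norm_eq_sqrt_sq_add_sq]; rfl
  have h1 : ‖c‖ * Real.cos c.arg = v.1.im := Complex.norm_mul_cos_arg c
  have h2 : ‖c‖ * Real.sin c.arg = v.2.im := Complex.norm_mul_sin_arg c
  obtain ⟨h3, h4⟩ := rotC_im (-c.arg) v
  set p := rotC ((-c.arg : ℝ) : ℂ) v with hp
  refine ⟨transEquiv (-p.1.re, -p.2.re) * rotCEquiv (-c.arg), ?_, ?_⟩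
  · exact G.mul_mem (Subgroup.subset_closure (Or.inr ⟨_, rfl⟩))
      (Subgroup.subset_closure (Or.inl ⟨_, rfl⟩))
  · rw [hn, Equiv.Perm.mul_apply]
    change transEquiv (-p.1.re, -p.2.re) p = _
    rw [Real.cos_neg, Real.sin_neg, ← h1, ← h2] at h3 h4
    have h5 : p.1.im = ‖c‖ := by
      rw [h3]; linear_combination ‖c‖ * Real.sin_sq_add_cos_sq c.arg
    have h6 : p.2.im = 0 := by rw [h4]; ring
    refine Prod.ext (Complex.ext ?_ ?_) (Complex.ext ?_ ?_) <;> simp [transEquiv, h5, h6]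

lemma G_orbit (v v' : ℂ × ℂ) :
    (∃ g ∈ G, g v = v') ↔ enorm2 (v.1.im, v.2.im) = enorm2 (v'.1.im, v'.2.im) := by
  constructor
  · rintro ⟨g, hg, rfl⟩
    exact (G_enorm2 g hg v).symm
  · intro h
    obtain ⟨g, hg, h1⟩ := G_canon v
    obtain ⟨k, hk, h2⟩ := G_canon v'
    refine ⟨k⁻¹ * g, G.mul_mem (G.inv_mem hk) hg, ?_⟩
    rw [Equiv.Perm.mul_apply, h1, h, ← h2]
    exact (k.symm_apply_apply _)

/-- Two points `v, v' ∈ ℂ²` lie in the same `𝒢`-orbit if and only if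
`‖Im v‖ = ‖Im v'‖`; consequently every `𝒢`-orbit contains exactly one point of the form
`(i·s, 0)` with `s ≥ 0`. -/
theorem stmt_14 :
    (∀ v v' : ℂ × ℂ,
      (∃ g ∈ G, g v = v') ↔ enorm2 (v.1.im, v.2.im) = enorm2 (v'.1.im, v'.2.im)) ∧
    (∀ v : ℂ × ℂ, ∃! p : ℂ × ℂ,
      (∃ s : ℝ, 0 ≤ s ∧ p = (Complex.I * s, 0)) ∧ ∃ g ∈ G, g v = p) := by
  refine ⟨G_orbit, fun v => ⟨_, ⟨⟨_, Real.sqrt_nonneg _, rfl⟩, G_canon v⟩, ?_⟩⟩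
  rintro p ⟨⟨s, hs, rfl⟩, hg⟩
  have h := (G_orbit _ _).1 hg
  have h' : enorm2 ((Complex.I * (s : ℂ)).im, (0 : ℂ).im) = s := by
    simp [enorm2, Real.sqrt_sq hs]
  have h2 : enorm2 (v.1.im, v.2.im) = s := h.trans h'
  change _ = (Complex.I * ((enorm2 (v.1.im, v.2.im) : ℝ) : ℂ), (0 : ℂ))
  rw [h2]
end

section
/- The set 𝒮 of all matrices in M_{2r}(ℝ) of the block form with U in positions (1,1) and (3,3), I_{r−2} in positions (2,2) and (4,4), B in position (1,3), and zeros elsewhere, where U ranges over SO(2,ℝ) (2×2 rotation matrices) and B ranges over the symmetric 2×2 real matrices of trace 0, is a closed subgroup of Sp(2r,ℝ). -/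
/-- The standard symplectic form `J` on `ℝ^{2r}`: `I₂` in position (1,3), `I_{r−2}` in
position (2,4), `−I₂` in position (3,1), `−I_{r−2}` in position (4,2). -/
def Jmat (r : ℕ) : Matrix (Fin (2 * r)) (Fin (2 * r)) ℝ := fun i j =>
  if (j : ℕ) = (i : ℕ) + r then 1 else if (i : ℕ) = (j : ℕ) + r then -1 else 0

/-- The symplectic group `Sp(2r,ℝ) = {g : gᵀJg = J}`. -/
def SpSet (r : ℕ) : Set (Matrix (Fin (2 * r)) (Fin (2 * r)) ℝ) :=
  {g | g.transpose * Jmat r * g = Jmat r}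

/-- The `2r × 2r` matrix with blocks (of sizes `(2, r−2, 2, r−2)`): `U` in positions
(1,1) and (3,3), `I_{r−2}` in positions (2,2) and (4,4), `B` in position (1,3), and
zeros elsewhere. -/
def assemble (r : ℕ) (hr : 2 ≤ r) (U B : Matrix (Fin 2) (Fin 2) ℝ) :
    Matrix (Fin (2 * r)) (Fin (2 * r)) ℝ := fun i j =>
  if hi : (i : ℕ) < 2 then
    (if hj : (j : ℕ) < 2 then U ⟨(i : ℕ), hi⟩ ⟨(j : ℕ), hj⟩
     else if hj2 : r ≤ (j : ℕ) ∧ (j : ℕ) < r + 2 then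
       B ⟨(i : ℕ), hi⟩ ⟨(j : ℕ) - r, by omega⟩
     else 0)
  else if hi2 : (i : ℕ) < r then (if (i : ℕ) = (j : ℕ) then 1 else 0)
  else if hi3 : (i : ℕ) < r + 2 then
    (if hj : r ≤ (j : ℕ) ∧ (j : ℕ) < r + 2 then
      U ⟨(i : ℕ) - r, by omega⟩ ⟨(j : ℕ) - r, by omega⟩
     else 0)
  else (if (i : ℕ) = (j : ℕ) then 1 else 0)

/-- The set `𝒮` of matrices of the above block form, with `U ∈ SO(2,ℝ)` and `B`
symmetric of trace 0. -/
def Sset (r : ℕ) (hr : 2 ≤ r) : Set (Matrix (Fin (2 * r)) (Fin (2 * r)) ℝ) :=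
  {A | ∃ U B : Matrix (Fin 2) (Fin 2) ℝ,
    U.transpose * U = 1 ∧ U.det = 1 ∧ B.transpose = B ∧ B.trace = 0 ∧
    A = assemble r hr U B}

/-- Block indices versus `Fin (2 * (2 + s))`. -/
def blockEquiv (s : ℕ) : (Fin 2 ⊕ Fin s) ⊕ (Fin 2 ⊕ Fin s) ≃ Fin (2 * (2 + s)) :=
  ((Equiv.sumCongr finSumFinEquiv finSumFinEquiv).trans finSumFinEquiv).trans
    (finCongr (by omega))

/-- Block form of `assemble`. -/
def blk (s : ℕ) (U B : Matrix (Fin 2) (Fin 2) ℝ) :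
    Matrix ((Fin 2 ⊕ Fin s) ⊕ (Fin 2 ⊕ Fin s)) ((Fin 2 ⊕ Fin s) ⊕ (Fin 2 ⊕ Fin s)) ℝ :=
  Matrix.fromBlocks (Matrix.fromBlocks U 0 0 1) (Matrix.fromBlocks B 0 0 0) 0
    (Matrix.fromBlocks U 0 0 1)

theorem be1 (s : ℕ) (i : Fin 2) : (blockEquiv s (.inl (.inl i)) : ℕ) = i := by
  simp [blockEquiv]
theorem be2 (s : ℕ) (i : Fin s) : (blockEquiv s (.inl (.inr i)) : ℕ) = 2 + i := by
  simp [blockEquiv]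
theorem be3 (s : ℕ) (i : Fin 2) : (blockEquiv s (.inr (.inl i)) : ℕ) = 2 + s + i := by
  simp [blockEquiv]; omega
theorem be4 (s : ℕ) (i : Fin s) : (blockEquiv s (.inr (.inr i)) : ℕ) = 2 + s + (2 + i) := by
  simp [blockEquiv]; omega

theorem assemble_sub (s : ℕ) (hr : 2 ≤ 2 + s) (U B : Matrix (Fin 2) (Fin 2) ℝ) :
    (assemble (2 + s) hr U B).submatrix (blockEquiv s) (blockEquiv s) = blk s U B := by
  ext i j
  rcases i with (i | i) | (i | i) <;> rcases j with (j | j) | (j | j) <;>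
    have hi := i.2 <;> have hj := j.2 <;>
    simp only [Matrix.submatrix_apply, assemble, be1, be2, be3, be4, blk,
      Matrix.fromBlocks_apply₁₁, Matrix.fromBlocks_apply₁₂, Matrix.fromBlocks_apply₂₁,
      Matrix.fromBlocks_apply₂₂, Matrix.zero_apply, Matrix.one_apply, Fin.ext_iff] <;>
    split_ifs <;> first | rfl | (exfalso; omega) | (congr 1 <;> ext <;> simp)

theorem Jmat_sub (s : ℕ) :
    (Jmat (2 + s)).submatrix (blockEquiv s) (blockEquiv s) = Matrix.fromBlocks 0 1 (-1) 0 := by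
  ext i j
  rcases i with (i | i) | (i | i) <;> rcases j with (j | j) | (j | j) <;>
    have hi := i.2 <;> have hj := j.2 <;>
    simp only [Matrix.submatrix_apply, Jmat, be1, be2, be3, be4,
      Matrix.fromBlocks_apply₁₁, Matrix.fromBlocks_apply₁₂, Matrix.fromBlocks_apply₂₁,
      Matrix.fromBlocks_apply₂₂, Matrix.zero_apply, Matrix.one_apply, Matrix.neg_apply,
      Sum.inl.injEq, Sum.inr.injEq, reduceCtorEq, if_false, neg_zero, Fin.ext_iff] <;>
    split_ifs <;> first | rfl | (exfalso; omega) | simp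

theorem sub_inj (s : ℕ) {A B : Matrix (Fin (2 * (2 + s))) (Fin (2 * (2 + s))) ℝ}
    (h : A.submatrix (blockEquiv s) (blockEquiv s) = B.submatrix (blockEquiv s) (blockEquiv s)) :
    A = B :=
  (Matrix.reindex (blockEquiv s).symm (blockEquiv s).symm).injective h

theorem blk_mul (s : ℕ) (U B U' B' : Matrix (Fin 2) (Fin 2) ℝ) :
    blk s U B * blk s U' B' = blk s (U * U') (U * B' + B * U') := by
  simp [blk, Matrix.fromBlocks_multiply, Matrix.fromBlocks_add]

theorem assemble_mul (r : ℕ) (hr : 2 ≤ r) (U B U' B' : Matrix (Fin 2) (Fin 2) ℝ) :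
    assemble r hr U B * assemble r hr U' B' = assemble r hr (U * U') (U * B' + B * U') := by
  obtain ⟨s, rfl⟩ := Nat.exists_eq_add_of_le hr
  apply sub_inj
  rw [← Matrix.submatrix_mul_equiv _ _ _ (blockEquiv s)]
  simp only [assemble_sub, blk_mul]

theorem assemble_one (r : ℕ) (hr : 2 ≤ r) : assemble r hr 1 0 = 1 := by
  obtain ⟨s, rfl⟩ := Nat.exists_eq_add_of_le hr
  apply sub_inj
  rw [assemble_sub]
  simp [blk]

theorem assemble_sp (r : ℕ) (hr : 2 ≤ r) (U B : Matrix (Fin 2) (Fin 2) ℝ)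
    (hU : U.transpose * U = 1) (h : U.transpose * B = B.transpose * U) :
    assemble r hr U B ∈ SpSet r := by
  obtain ⟨s, rfl⟩ := Nat.exists_eq_add_of_le hr
  show _ = _
  apply sub_inj
  rw [← Matrix.submatrix_mul_equiv _ _ _ (blockEquiv s),
    ← Matrix.submatrix_mul_equiv _ _ _ (blockEquiv s), ← Matrix.transpose_submatrix]
  simp only [assemble_sub, Jmat_sub]
  simp [blk, Matrix.fromBlocks_multiply, Matrix.fromBlocks_transpose, Matrix.fromBlocks_add,
    Matrix.fromBlocks_neg, hU, h]
  rw [← Matrix.fromBlocks_one, Matrix.fromBlocks_neg]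
  simp

theorem so2_form (U : Matrix (Fin 2) (Fin 2) ℝ) (hU : U.transpose * U = 1) (hd : U.det = 1) :
    ∃ a b : ℝ, U = !![a, -b; b, a] ∧ a * a + b * b = 1 := by
  have h00 := congrFun (congrFun hU 0) 0
  have h01 := congrFun (congrFun hU 0) 1
  have h11 := congrFun (congrFun hU 1) 1
  simp [Matrix.mul_apply, Fin.sum_univ_two] at h00 h01 h11
  rw [Matrix.det_fin_two] at hd
  have e1 : U 0 0 = U 1 1 := by
    linear_combination (-U 0 0) * hd + U 1 1 * h00 - U 1 0 * h01
  have e2 : U 0 1 = - U 1 0 := by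
    linear_combination (-U 0 1) * h00 + U 0 0 * h01 + (-U 1 0) * hd
  refine ⟨U 0 0, U 1 0, ?_, h00⟩
  ext i j
  fin_cases i <;> fin_cases j <;> simp [e1, e2]

theorem sym_form (B : Matrix (Fin 2) (Fin 2) ℝ) (hB : B.transpose = B) (ht : B.trace = 0) :
    ∃ p q : ℝ, B = !![p, q; q, -p] := by
  have h01 := congrFun (congrFun hB 0) 1
  simp only [Matrix.transpose_apply] at h01
  rw [Matrix.trace_fin_two] at ht
  refine ⟨B 0 0, B 0 1, ?_⟩
  ext i j
  fin_cases i <;> fin_cases j <;> simp [h01]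
  linarith

theorem mem_Sset (r : ℕ) (hr : 2 ≤ r) (A : Matrix (Fin (2 * r)) (Fin (2 * r)) ℝ) :
    A ∈ Sset r hr ↔ ∃ a b p q : ℝ, a * a + b * b = 1 ∧
      A = assemble r hr !![a, -b; b, a] !![p, q; q, -p] := by
  constructor
  · rintro ⟨U, B, hU, hd, hB, ht, rfl⟩
    obtain ⟨a, b, rfl, hab⟩ := so2_form U hU hd
    obtain ⟨p, q, rfl⟩ := sym_form B hB ht
    exact ⟨a, b, p, q, hab, rfl⟩
  · rintro ⟨a, b, p, q, hab, rfl⟩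
    refine ⟨_, _, ?_, ?_, ?_, ?_, rfl⟩
    · ext i j
      fin_cases i <;> fin_cases j <;> simp [Matrix.mul_apply, Fin.sum_univ_two] <;> linarith
    · simp [Matrix.det_fin_two, hab]
    · ext i j
      fin_cases i <;> fin_cases j <;> simp
    · simp [Matrix.trace_fin_two]

theorem Sset_closed (r : ℕ) (hr : 2 ≤ r) : IsClosed (Sset r hr) := by
  let u : Fin 2 → Fin (2 * r) := fun i => ⟨i, by omega⟩
  let v : Fin 2 → Fin (2 * r) := fun i => ⟨r + i, by omega⟩
  have hu : ∀ U B, (assemble r hr U B).submatrix u u = U := by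
    intro U B
    ext i j
    have hi : (i : ℕ) ≤ 1 := by omega
    have hj : (j : ℕ) ≤ 1 := by omega
    simp [assemble, u, hi, hj]
  have hv : ∀ U B, (assemble r hr U B).submatrix u v = B := by
    intro U B
    ext i j
    have : ¬ (r + (j : ℕ) < 2) := by omega
    have hi : (i : ℕ) ≤ 1 := by omega
    have hj : (j : ℕ) ≤ 1 := by omega
    simp [assemble, u, v, this, hi, hj]
  have hS : Sset r hr = {A | (A.submatrix u u).transpose * A.submatrix u u = 1 ∧
      (A.submatrix u u).det = 1 ∧ (A.submatrix u v).transpose = A.submatrix u v ∧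
      (A.submatrix u v).trace = 0 ∧ A = assemble r hr (A.submatrix u u) (A.submatrix u v)} := by
    ext A
    constructor
    · rintro ⟨U, B, h1, h2, h3, h4, rfl⟩
      simp only [Set.mem_ofPred_eq, hu, hv]
      exact ⟨h1, h2, h3, h4, trivial⟩
    · rintro ⟨h1, h2, h3, h4, h5⟩
      exact ⟨_, _, h1, h2, h3, h4, h5⟩
  have cu : Continuous fun A : Matrix (Fin (2 * r)) (Fin (2 * r)) ℝ => A.submatrix u u :=
    continuous_id.matrix_submatrix u u
  have cv : Continuous fun A : Matrix (Fin (2 * r)) (Fin (2 * r)) ℝ => A.submatrix u v :=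
    continuous_id.matrix_submatrix u v
  rw [hS]
  refine (isClosed_eq (cu.matrix_transpose.matrix_mul cu) continuous_const).inter
    ((isClosed_eq cu.matrix_det continuous_const).inter
    ((isClosed_eq cv.matrix_transpose cv).inter
    ((isClosed_eq cv.matrix_trace continuous_const).inter
    (isClosed_eq continuous_id ?_))))
  refine continuous_matrix fun i j => ?_
  unfold assemble
  split_ifs <;> first | exact continuous_const | exact cu.matrix_elem _ _ | exact cv.matrix_elem _ _


/-- The set `𝒮` is a closed subgroup of `Sp(2r,ℝ)`: it is contained in
`Sp(2r,ℝ)`, contains the identity, is closed under multiplication and inverses, and is a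
closed subset. -/
theorem stmt_16 (r : ℕ) (hr : 2 ≤ r) :
    Sset r hr ⊆ SpSet r ∧
    (1 : Matrix (Fin (2 * r)) (Fin (2 * r)) ℝ) ∈ Sset r hr ∧
    (∀ A ∈ Sset r hr, ∀ B ∈ Sset r hr, A * B ∈ Sset r hr) ∧
    (∀ A ∈ Sset r hr, A⁻¹ ∈ Sset r hr) ∧
    IsClosed (Sset r hr) := by
  refine ⟨?_, ?_, ?_, ?_, Sset_closed r hr⟩
  · intro A hA
    have hA' := hA
    obtain ⟨a, b, p, q, hab, rfl⟩ := (mem_Sset r hr A).1 hA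
    apply assemble_sp
    · ext i j
      fin_cases i <;> fin_cases j <;> simp [Matrix.mul_apply, Fin.sum_univ_two] <;> linarith
    · ext i j
      fin_cases i <;> fin_cases j <;> simp [Matrix.mul_apply, Fin.sum_univ_two] <;> ring
  · refine (mem_Sset r hr 1).2 ⟨1, 0, 0, 0, by norm_num, ?_⟩
    rw [← assemble_one r hr]
    congr 1 <;> ext i j <;> fin_cases i <;> fin_cases j <;> simp
  · intro A hA B hB
    obtain ⟨a, b, p, q, hab, rfl⟩ := (mem_Sset r hr A).1 hA
    obtain ⟨c, d, x, y, hcd, rfl⟩ := (mem_Sset r hr B).1 hB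
    rw [assemble_mul]
    refine (mem_Sset r hr _).2 ⟨a * c - b * d, b * c + a * d, a * x - b * y + p * c + q * d,
      a * y + b * x - p * d + q * c, ?_, ?_⟩
    · linear_combination (c * c + d * d) * hab + hcd
    · congr 1 <;> ext i j <;> fin_cases i <;> fin_cases j <;>
        simp [Matrix.mul_apply, Fin.sum_univ_two] <;> ring
  · intro A hA
    obtain ⟨a, b, p, q, hab, rfl⟩ := (mem_Sset r hr A).1 hA
    refine (mem_Sset r hr _).2 ⟨a, -b, -p, -q, by linarith, ?_⟩
    apply Matrix.inv_eq_right_inv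
    rw [assemble_mul, ← assemble_one r hr]
    congr 1 <;> ext i j <;> fin_cases i <;> fin_cases j <;>
      simp [Matrix.mul_apply, Fin.sum_univ_two] <;> linarith
end

section
/- Let t, t' ∈ [0,∞), g ∈ SL(2,ℝ), and k ∈ SO(2,ℂ). If g·u(it) = u(it')·k, then t = t'. (Equivalently: the curve t ↦ u(it)·SO(2,ℂ) in SL(2,ℂ)/SO(2,ℂ), t ≥ 0, meets each SL(2,ℝ)-orbit in at most one point.) -/
/-- `u(z) = [[1, z],[0,1]] = exp(zE) ∈ SL(2,ℂ)`. -/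
def uMat (z : ℂ) : Matrix (Fin 2) (Fin 2) ℂ := !![1, z; 0, 1]

/-- Let `t, t' ∈ [0,∞)`, `g ∈ SL(2,ℝ)` and `k ∈ SO(2,ℂ)`.
If `g·u(it) = u(it')·k` then `t = t'`; i.e. the curve `t ↦ u(it)·SO(2,ℂ)` in
`SL(2,ℂ)/SO(2,ℂ)`, `t ≥ 0`, meets each `SL(2,ℝ)`-orbit in at most one point. -/
theorem stmt_17 (g k : Matrix (Fin 2) (Fin 2) ℂ)
    (hg_det : g.det = 1) (hg_real : ∀ i j, (g i j).im = 0)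
    (hk_det : k.det = 1) (hk_orth : k.transpose * k = 1)
    (t t' : ℝ) (ht : 0 ≤ t) (ht' : 0 ≤ t')
    (h : g * uMat (Complex.I * t) = uMat (Complex.I * t') * k) :
    t = t' := by
  have hkk : k * k.transpose = 1 := mul_eq_one_comm.mp hk_orth
  have key : (g * uMat (Complex.I * t)) * (g * uMat (Complex.I * t)).transpose
      = uMat (Complex.I * t') * (uMat (Complex.I * t')).transpose := by
    rw [h, Matrix.transpose_mul, Matrix.mul_assoc, ← Matrix.mul_assoc k, hkk, Matrix.one_mul]
  have a0 := hg_real 0 0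
  have b0 := hg_real 0 1
  have c0 := hg_real 1 0
  have d0 := hg_real 1 1
  have e1 := congrArg Complex.re (congrFun (congrFun key 0) 0)
  have e2 := congrArg Complex.re (congrFun (congrFun key 0) 1)
  have e3 := congrArg Complex.re (congrFun (congrFun key 1) 1)
  have e4 := congrArg Complex.re hg_det
  rw [Matrix.det_fin_two] at e4
  simp [uMat, Matrix.mul_apply, Fin.sum_univ_two, a0, b0, c0, d0] at e1 e2 e3 e4
  generalize (g 0 0).re = a at *
  generalize (g 0 1).re = b at *
  generalize (g 1 0).re = c at *
  generalize (g 1 1).re = d at *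
  have hsq : t ^ 2 = t' ^ 2 := by
    have f1 : a ^ 2 * (1 - t ^ 2) + b ^ 2 = 1 - t' ^ 2 := by linarith
    have f2 : a * c * (1 - t ^ 2) + b * d = 0 := by linarith
    have f3 : c ^ 2 * (1 - t ^ 2) + d ^ 2 = 1 := by linarith
    have f4 : (a * d - b * c) ^ 2 * (1 - t ^ 2) = 1 - t' ^ 2 := by
      calc _ = (a ^ 2 * (1 - t ^ 2) + b ^ 2) * (c ^ 2 * (1 - t ^ 2) + d ^ 2)
            - (a * c * (1 - t ^ 2) + b * d) ^ 2 := by ring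
        _ = _ := by rw [f1, f2, f3]; ring
    rw [e4] at f4
    linarith
  exact (sq_eq_sq₀ ht ht').mp hsq
end

section
/- (a) If z, w ∈ ℂ and u(z) = u(w)·k for some k ∈ SO(2,ℂ), then z = w; hence the map z ↦ u(z)·SO(2,ℂ) from ℂ to SL(2,ℂ)/SO(2,ℂ) is injective. (b) The set {u(z)·k : z ∈ ℂ, k ∈ SO(2,ℂ)} is closed in SL(2,ℂ); hence the image of this map is a closed subset of SL(2,ℂ)/SO(2,ℂ). -/
/-- (a) If `u(z) = u(w)·k` for some `k ∈ SO(2,ℂ)` then `z = w`; hence the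
map `z ↦ u(z)·SO(2,ℂ)` from `ℂ` to `SL(2,ℂ)/SO(2,ℂ)` is injective.
(b) The set `{u(z)·k : z ∈ ℂ, k ∈ SO(2,ℂ)}` is closed in `SL(2,ℂ)`; hence the image of
this map is a closed subset of `SL(2,ℂ)/SO(2,ℂ)`. -/
theorem stmt_18 :
    (∀ z w : ℂ, ∀ k : Matrix (Fin 2) (Fin 2) ℂ,
      k.det = 1 → k.transpose * k = 1 → uMat z = uMat w * k → z = w) ∧
    IsClosed {g : Matrix (Fin 2) (Fin 2) ℂ | ∃ z : ℂ, ∃ k : Matrix (Fin 2) (Fin 2) ℂ,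
      k.det = 1 ∧ k.transpose * k = 1 ∧ g = uMat z * k} := by
  constructor
  · intro z w k hdet hk h
    have h' : k * k.transpose = 1 := mul_eq_one_comm.mp hk
    have e00 := congrFun (congrFun h 0) 0
    have e01 := congrFun (congrFun h 0) 1
    have e10 := congrFun (congrFun h 1) 0
    have e11 := congrFun (congrFun h 1) 1
    have f01 := congrFun (congrFun h' 0) 1
    simp [uMat, Matrix.mul_apply, Fin.sum_univ_two] at e00 e01 e10 e11 f01
    rw [← e11, ← e10] at f01
    rw [← e11] at e01
    linear_combination e01 + f01
  · have hset : {g : Matrix (Fin 2) (Fin 2) ℂ | ∃ z : ℂ, ∃ k : Matrix (Fin 2) (Fin 2) ℂ,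
        k.det = 1 ∧ k.transpose * k = 1 ∧ g = uMat z * k} =
        {g | g.det = 1} ∩ {g | g 1 0 ^ 2 + g 1 1 ^ 2 = 1} := by
      ext g
      constructor
      · rintro ⟨z, k, hdet, hk, rfl⟩
        have h' : k * k.transpose = 1 := mul_eq_one_comm.mp hk
        have f11 := congrFun (congrFun h' 1) 1
        refine ⟨?_, ?_⟩
        · change (uMat z * k).det = 1
          rw [Matrix.det_mul, hdet]
          simp [uMat, Matrix.det_fin_two]
        · change (uMat z * k) 1 0 ^ 2 + (uMat z * k) 1 1 ^ 2 = 1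
          simp only [Matrix.mul_apply, Fin.sum_univ_two] at f11 ⊢
          simp [uMat] at f11 ⊢
          linear_combination f11
      · rintro ⟨h1, h2⟩
        simp only [Set.mem_ofPred_eq, Matrix.det_fin_two] at h1 h2
        refine ⟨g 0 0 * g 1 0 + g 0 1 * g 1 1, !![g 1 1, -g 1 0; g 1 0, g 1 1], ?_, ?_, ?_⟩
        · simp [Matrix.det_fin_two]
          linear_combination h2
        · ext i j
          fin_cases i <;> fin_cases j <;>
            simp [Matrix.mul_apply, Fin.sum_univ_two]
          · linear_combination h2
          · ring
          · ring
          · linear_combination h2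
        · ext i j
          fin_cases i <;> fin_cases j <;>
            simp [uMat, Matrix.mul_apply, Fin.sum_univ_two]
          · linear_combination g 1 1 * h1 - g 0 0 * h2
          · linear_combination -g 1 0 * h1 - g 0 1 * h2
    rw [hset]
    refine IsClosed.inter (isClosed_eq ?_ continuous_const) (isClosed_eq ?_ continuous_const)
    · exact continuous_id.matrix_det
    · fun_prop
end
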